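/- arXiv:1903.06981 — 2 statements merged into one kernel-verified Lean document; each statement's English description precedes it below -/
import Mathlib

section
/- On the tree T_k consisting of a path p_k,...,p_1,c,p'_1,...,p'_k of 2k+1 vertices with k extra leaves attached to the center c, where the leaf tokens and center token are initially home and path token at p_i must go to p'_i and vice versa: there is a swap sequence of length at most (3/2)k² + 9k, while any swap sequence that never moves tokens on happy leaves requires at least 2k² + k swaps. -/
/-- Apply a list of swaps to a token placement `π` (`π v` = token on vertex `v`). -/
def applySwaps {V : Type*} [DecidableEq V] (π : Equiv.Perm V) (s : List (V × V)) :
    Equiv.Perm V :=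
  s.foldl (fun σ e => σ * Equiv.swap e.1 e.2) π

/-- Vertices of the tree `T_k`: `Sum.inl (0, i)` is the path vertex `p_{i+1}`,
`Sum.inl (1, i)` is `p'_{i+1}`, `Sum.inl (2, i)` is the `i`-th extra leaf,
and `Sum.inr ()` is the center `c`. -/
abbrev V8 (k : ℕ) := (Fin 3 × Fin k) ⊕ Unit

/-- Oriented edges of `T_k`: center–`p_1`, center–`p'_1`, center–leaves, and
consecutive vertices along each of the two arms. -/
def base8 (k : ℕ) : V8 k → V8 k → Prop := fun u v =>
  match u, v with
  | Sum.inr _, Sum.inl (j, i) => ((i : ℕ) = 0 ∧ ((j : ℕ) = 0 ∨ (j : ℕ) = 1)) ∨ (j : ℕ) = 2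
  | Sum.inl (j, i), Sum.inl (j', i') =>
      j = j' ∧ ((j : ℕ) = 0 ∨ (j : ℕ) = 1) ∧ (i : ℕ) + 1 = (i' : ℕ)
  | _, _ => False

/-- Adjacency in `T_k` (symmetrization of `base8`). -/
def adj8 (k : ℕ) : V8 k → V8 k → Prop := fun u v => base8 k u v ∨ base8 k v u

/-- Leaves of the tree `T_k`: the `k` extra leaves and the two arm endpoints. -/
def isLeaf8 (k : ℕ) : V8 k → Prop := fun v =>
  match v with
  | Sum.inl (j, i) => (j : ℕ) = 2 ∨ (i : ℕ) + 1 = k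
  | Sum.inr _ => False

/-- Initial token placement on `T_k`: the token on `p_i` must go to `p'_i` and vice
versa (tokens are labelled by their destination vertices), while the tokens on the
center and on the extra leaves are already home. -/
def π8 (k : ℕ) : Equiv.Perm (V8 k) :=
  Equiv.sumCongr (Equiv.prodCongr (Equiv.swap 0 1) (Equiv.refl (Fin k))) (Equiv.refl Unit)

/-!
Upper bound: a stream of tokens held on the star formed by the center and the extra leaves can be
fed into an arm, deepest destination first, each token entering through the center and pushing the
arm's contents one step outwards; what falls out of the arm ends up on the star. This costs about
`k² / 2` swaps per arm. Parking the leaf tokens on the first arm frees its tokens to enter the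
second arm, which frees the tokens of the second arm to enter the first. After these three feeds
only the star is unsorted, which costs `O(k)` more.

Lower bound: if happy leaves are never moved then the extra leaves are never touched, so every
swap exchanges two consecutive vertices of the path and removes at most one inversion, while the
initial placement inverts every pair of the `2k + 1` path vertices.
-/

namespace TokenSwapping

section Reachability

variable {V : Type*} [DecidableEq V]

lemma applySwaps_append (σ : Equiv.Perm V) (s t : List (V × V)) :
    applySwaps σ (s ++ t) = applySwaps (applySwaps σ s) t :=
  List.foldl_append

/-- The placement `τ` is obtained from `σ` by at most `n` swaps along pairs related by `r`. In the
application `r` is the adjacency relation of a graph. -/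
def ReachableWithin (r : V → V → Prop) (n : ℕ) (σ τ : Equiv.Perm V) : Prop :=
  ∃ s : List (V × V), (∀ e ∈ s, r e.1 e.2) ∧ applySwaps σ s = τ ∧ s.length ≤ n

variable {r : V → V → Prop} {m n : ℕ} {σ τ ρ : Equiv.Perm V}

lemma ReachableWithin.refl (σ : Equiv.Perm V) : ReachableWithin r n σ σ :=
  ⟨[], by simp, rfl, Nat.zero_le n⟩

lemma ReachableWithin.trans (hστ : ReachableWithin r m σ τ) (hτρ : ReachableWithin r n τ ρ) :
    ReachableWithin r (m + n) σ ρ := by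
  obtain ⟨s, hs, rfl, hsm⟩ := hστ
  obtain ⟨t, ht, rfl, htn⟩ := hτρ
  refine ⟨s ++ t, List.forall_mem_append.2 ⟨hs, ht⟩, applySwaps_append σ s t, ?_⟩
  rw [List.length_append]
  exact Nat.add_le_add hsm htn

lemma ReachableWithin.mono (h : ReachableWithin r m σ τ) (hmn : m ≤ n) :
    ReachableWithin r n σ τ := by
  obtain ⟨s, hs, hsτ, hsm⟩ := h
  exact ⟨s, hs, hsτ, hsm.trans hmn⟩

lemma reachableWithin_mul_swap (σ : Equiv.Perm V) {u v : V} (h : v = u ∨ r u v) :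
    ReachableWithin r 1 σ (σ * Equiv.swap u v) := by
  rcases h with rfl | h
  · rw [Equiv.swap_self]
    exact .refl σ
  · exact ⟨[(u, v)], by simpa using h, rfl, le_rfl⟩

lemma exists_shift_along_path {w : Fin (n + 1) → V} (hw : Function.Injective w)
    (hr : ∀ i : Fin n, r (w i.castSucc) (w i.succ)) (σ : Equiv.Perm V) :
    ∃ τ, ReachableWithin r n σ τ ∧ (∀ i : Fin n, τ (w i.succ) = σ (w i.castSucc)) ∧
      ∀ v ∉ Set.range w, τ v = σ v := by
  induction n with
  | zero => exact ⟨σ, .refl σ, fun i => i.elim0, fun _ _ => rfl⟩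
  | succ n ih =>
    obtain ⟨τ, hστ, hshift, hoff⟩ :=
      ih (w := w ∘ Fin.succ) (hw.comp (Fin.succ_injective _)) (fun i => hr i.succ)
    have h_zero : w 0 ∉ Set.range (w ∘ Fin.succ) := by
      rintro ⟨i, hi⟩
      exact Fin.succ_ne_zero i (hw hi)
    refine ⟨τ * Equiv.swap (w 0) (w 1), hστ.trans (reachableWithin_mul_swap τ (.inr (hr 0))),
      fun i => ?_, fun v hv => ?_⟩
    · cases i using Fin.cases with
      | zero => simpa using hoff _ h_zero
      | succ i =>
        rw [Equiv.Perm.mul_apply, Equiv.swap_apply_of_ne_of_ne]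
        · exact hshift i
        · exact hw.ne (Fin.succ_ne_zero _)
        · exact hw.ne fun h => Fin.succ_ne_zero i (Fin.succ_injective _ h)
    · have hv' : ∀ i, v ≠ w i := fun i h => hv ⟨i, h.symm⟩
      rw [Equiv.Perm.mul_apply, Equiv.swap_apply_of_ne_of_ne (hv' 0) (hv' 1)]
      exact hoff v fun ⟨i, hi⟩ => hv' _ hi.symm

lemma exists_fill_path {L : Set V} {w : Fin (n + 1) → V} (hw : Function.Injective w)
    (hr : ∀ i : Fin n, r (w i.castSucc) (w i.succ)) (hwL : ∀ i : Fin n, w i.succ ∉ L)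
    (hL : ∀ v ∈ L, r (w 0) v) {f : Fin n → V} (hf : Function.Injective f) (σ : Equiv.Perm V)
    (hσ : ∀ v ∉ L, v ≠ w 0 → ∀ i, σ v ≠ f i) :
    ∃ τ, ReachableWithin r (n.choose 2 + 2 * n) σ τ ∧ (∀ i : Fin n, τ (w i.succ) = f i) ∧
      ∀ v ∉ L, v ∉ Set.range w → τ v = σ v := by
  induction n with
  | zero => exact ⟨σ, .refl σ, fun i => i.elim0, fun _ _ _ => rfl⟩
  | succ n ih =>
    obtain ⟨τ, hστ, hfill, hoff⟩ := ih (w := w ∘ Fin.castSucc) (f := f ∘ Fin.succ)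
      (hw.comp (Fin.castSucc_injective _)) (fun i => hr i.castSucc) (fun i => hwL i.castSucc) hL
      (hf.comp (Fin.succ_injective _)) (fun v hv hv0 i => hσ v hv hv0 i.succ)
    obtain ⟨u, hu⟩ := τ.surjective (f 0)
    have hu_star : u = w 0 ∨ u ∈ L := by
      by_contra! h
      by_cases hrange : u ∈ Set.range (w ∘ Fin.castSucc)
      · obtain ⟨i, rfl⟩ := hrange
        cases i using Fin.cases with
        | zero => exact h.1 rfl
        | succ i => exact Fin.succ_ne_zero i (hf ((hfill i).symm.trans hu))
      · exact hσ u h.2 h.1 0 ((hoff u h.2 hrange).symm.trans hu)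
    have h_center : (τ * Equiv.swap (w 0) u) (w 0) = f 0 := by simp [hu]
    have h_off_star : ∀ v ∉ L, v ≠ w 0 → (τ * Equiv.swap (w 0) u) v = τ v := by
      intro v hv hv0
      have hvu : v ≠ u := by rintro rfl; exact hu_star.elim hv0 hv
      rw [Equiv.Perm.mul_apply, Equiv.swap_apply_of_ne_of_ne hv0 hvu]
    obtain ⟨ρ, hτρ, hshift, hρoff⟩ := exists_shift_along_path hw hr (τ * Equiv.swap (w 0) u)
    refine ⟨ρ, ((hστ.trans (reachableWithin_mul_swap τ (hu_star.imp_right (hL u)))).trans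
      hτρ).mono ?_, fun i => ?_, fun v hv hrange => ?_⟩
    · have hchoose : (n + 1).choose 2 = n + n.choose 2 := by
        rw [Nat.choose_succ_succ' n 1, Nat.choose_one_right]
      omega
    · rw [hshift]
      cases i using Fin.cases with
      | zero => exact h_center
      | succ i =>
        exact (h_off_star _ (hwL i.castSucc) (hw.ne (Fin.succ_ne_zero _))).trans (hfill i)
    · rw [hρoff v hrange, h_off_star v hv fun h => hrange ⟨0, h.symm⟩]
      exact hoff v hv fun ⟨i, hi⟩ => hrange ⟨_, hi⟩

lemma reachableWithin_one_of_forall_notMem_star {c : V} (L : Finset V) (hL : ∀ v ∈ L, r c v)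
    (σ : Equiv.Perm V) (hσ : ∀ v ∉ L, v ≠ c → σ v = v) :
    ReachableWithin r (2 * L.card) σ 1 := by
  induction L using Finset.induction_on generalizing σ with
  | empty =>
    have hσ_one : σ = 1 := by
      refine Equiv.ext fun v => ?_
      by_contra hv
      have hvc : v = c := by_contra fun h => hv (hσ v (by simp) h)
      have hσv : σ v ≠ c := fun h => hv (h.trans hvc.symm)
      exact hv (σ.injective (hσ (σ v) (by simp) hσv))
    rw [hσ_one]
    exact .refl 1
  | insert x L hx ih =>
    obtain ⟨u, hu⟩ := σ.surjective x
    have hu_star : u = c ∨ r c u := by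
      by_contra! h
      have huL : u ∉ insert x L := fun h' => h.2 (hL u h')
      exact huL ((hσ u huL h.1).symm.trans hu ▸ Finset.mem_insert_self x L)
    have hrest : ∀ v ∉ L, v ≠ c → (σ * Equiv.swap c u * Equiv.swap c x) v = v := by
      intro v hv hvc
      rcases eq_or_ne v x with rfl | hvx
      · simp [hu]
      · have hσv : σ v = v := hσ v (by simp [hv, hvx]) hvc
        have hvu : v ≠ u := by
          rintro rfl
          exact hvx (hσv.symm.trans hu)
        rw [Equiv.Perm.mul_apply, Equiv.swap_apply_of_ne_of_ne hvc hvx, Equiv.Perm.mul_apply,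
          Equiv.swap_apply_of_ne_of_ne hvc hvu, hσv]
    have hplace : ReachableWithin r (1 + 1) σ (σ * Equiv.swap c u * Equiv.swap c x) :=
      (reachableWithin_mul_swap σ hu_star).trans
        (reachableWithin_mul_swap _ (.inr (hL x (Finset.mem_insert_self x L))))
    refine (hplace.trans (ih (fun v hv => hL v (Finset.mem_insert_of_mem hv)) _ hrest)).mono ?_
    rw [Finset.card_insert_of_notMem hx]
    omega

end Reachability

section HappyVertices

variable {V : Type*} [DecidableEq V]

/-- The swap sequence `s`, started at `σ`, fixes the happy vertices of `L`: no swap moves the token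
of a vertex of `L` that has reached its destination. In the application `L` is a set of leaves. -/
def FixesHappy (L : Set V) (σ : Equiv.Perm V) (s : List (V × V)) : Prop :=
  ∀ (t : ℕ) (h : t < s.length) (u : V), (u = (s.get ⟨t, h⟩).1 ∨ u = (s.get ⟨t, h⟩).2) → u ∈ L →
    applySwaps σ (s.take t) u ≠ u

variable {L : Set V} {σ : Equiv.Perm V} {e : V × V} {s : List (V × V)}

lemma FixesHappy.mono {L' : Set V} (h : FixesHappy L σ s) (hL : L' ⊆ L) : FixesHappy L' σ s :=
  fun t ht u hu huL => h t ht u hu (hL huL)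

lemma FixesHappy.head (h : FixesHappy L σ (e :: s)) {u : V} (huL : u ∈ L) (hu : σ u = u) :
    u ≠ e.1 ∧ u ≠ e.2 :=
  ⟨fun h1 => h 0 (Nat.zero_lt_succ _) u (.inl h1) huL hu,
    fun h2 => h 0 (Nat.zero_lt_succ _) u (.inr h2) huL hu⟩

lemma FixesHappy.tail (h : FixesHappy L σ (e :: s)) :
    FixesHappy L (σ * Equiv.swap e.1 e.2) s :=
  fun t ht u hu huL => h (t + 1) (Nat.succ_lt_succ ht) u hu huL

lemma FixesHappy.forall_notMem (h : FixesHappy L σ s) (hσ : ∀ u ∈ L, σ u = u) :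
    ∀ e ∈ s, e.1 ∉ L ∧ e.2 ∉ L := by
  induction s generalizing σ with
  | nil => simp
  | cons e s ih =>
    have h_head : ∀ u ∈ L, u ≠ e.1 ∧ u ≠ e.2 := fun u hu => h.head hu (hσ u hu)
    refine List.forall_mem_cons.2
      ⟨⟨fun he => (h_head _ he).1 rfl, fun he => (h_head _ he).2 rfl⟩, ih h.tail fun u hu => ?_⟩
    rw [Equiv.Perm.mul_apply, Equiv.swap_apply_of_ne_of_ne (h_head u hu).1 (h_head u hu).2, hσ u hu]

end HappyVertices

section Inversions

variable {V α : Type*} [LinearOrder α] {pos : V → α}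

lemma lt_swap_of_covBy [DecidableEq V] (hpos : Function.Injective pos) {a b u v : V}
    (hab : pos a ⋖ pos b) (huv : pos u < pos v) (h : ¬(u = a ∧ v = b)) :
    pos (Equiv.swap a b u) < pos (Equiv.swap a b v) := by
  have above : ∀ {x}, x ≠ b → pos a < pos x → pos b < pos x :=
    fun hx hax => lt_of_le_of_ne (hab.ge_of_gt hax) (hpos.ne hx.symm)
  have below : ∀ {x}, x ≠ a → pos x < pos b → pos x < pos a :=
    fun hx hxb => lt_of_le_of_ne (hab.le_of_lt hxb) (hpos.ne hx)
  have := hab.lt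
  simp only [Equiv.swap_apply_def]
  grind

variable [Fintype V]

/-- The pairs of tokens whose current order along `pos` is opposite to the order of their
destinations. Pairs of tokens, rather than of vertices, are recorded so that a swap of neighbouring
vertices affects a single pair. -/
def inversions (pos : V → α) (σ : Equiv.Perm V) : Finset (V × V) :=
  {p | pos p.1 < pos p.2 ∧ pos (σ.symm p.2) < pos (σ.symm p.1)}

lemma inversions_one (pos : V → α) : inversions pos 1 = ∅ :=
  Finset.filter_eq_empty_iff.2 fun _ _ h => lt_asymm h.1 h.2

lemma choose_two_le_card_inversions (hpos : Function.Injective pos) {σ : Equiv.Perm V}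
    {P : Finset V} (hP : ∀ u ∈ P, ∀ v ∈ P, pos u < pos v → pos (σ.symm v) < pos (σ.symm u)) :
    P.card.choose 2 ≤ (inversions pos σ).card := by
  classical
  rw [← Finset.card_powersetCard]
  refine Finset.card_le_card_of_surjOn (fun p => {p.1, p.2}) fun Q hQ => ?_
  obtain ⟨hQP, hQ2⟩ := Finset.mem_powersetCard.1 hQ
  obtain ⟨u, v, huv, rfl⟩ := Finset.card_eq_two.1 hQ2
  have hu : u ∈ P := hQP (by simp)
  have hv : v ∈ P := hQP (by simp)
  rcases (hpos.ne huv).lt_or_gt with h | h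
  · exact ⟨(u, v), by simpa [inversions] using ⟨h, hP u hu v hv h⟩, rfl⟩
  · exact ⟨(v, u), by simpa [inversions] using ⟨h, hP v hv u hu h⟩, Finset.pair_comm v u⟩

variable [DecidableEq V]

lemma card_inversions_le_mul_swap (hpos : Function.Injective pos) (σ : Equiv.Perm V) {a b : V}
    (hab : pos a ⋖ pos b ∨ pos b ⋖ pos a) :
    (inversions pos σ).card ≤ (inversions pos (σ * Equiv.swap a b)).card + 1 := by
  wlog h : pos a ⋖ pos b generalizing a b
  · rw [Equiv.swap_comm]
    exact this hab.symm (hab.resolve_left h)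
  refine (Finset.card_le_card ?_).trans (Finset.card_insert_le (σ b, σ a) _)
  rintro ⟨x, y⟩ hxy
  simp only [inversions, Finset.mem_filter, Finset.mem_univ, true_and, Finset.mem_insert] at hxy ⊢
  by_cases hswapped : σ.symm y = a ∧ σ.symm x = b
  · left
    simp [← hswapped.1, ← hswapped.2]
  · exact .inr ⟨hxy.1, lt_swap_of_covBy hpos h hxy.2 hswapped⟩

lemma card_inversions_le_applySwaps (hpos : Function.Injective pos) (σ : Equiv.Perm V)
    {s : List (V × V)} (hs : ∀ e ∈ s, pos e.1 ⋖ pos e.2 ∨ pos e.2 ⋖ pos e.1) :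
    (inversions pos σ).card ≤ (inversions pos (applySwaps σ s)).card + s.length := by
  induction s generalizing σ with
  | nil => exact le_rfl
  | cons e s ih =>
    obtain ⟨he, hs⟩ := List.forall_mem_cons.1 hs
    calc (inversions pos σ).card
        ≤ (inversions pos (σ * Equiv.swap e.1 e.2)).card + 1 :=
          card_inversions_le_mul_swap hpos σ he
      _ ≤ (inversions pos (applySwaps σ (e :: s))).card + s.length + 1 :=
          Nat.add_le_add_right (ih _ hs) 1

end Inversions

section Tree

variable {k : ℕ}

/-- The `k` leaves attached to the center of `T_k`, without the two arm endpoints. -/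
def extraLeaves (k : ℕ) : Finset (V8 k) :=
  Finset.univ.image fun i => Sum.inl (2, i)

@[simp]
lemma inl_mem_extraLeaves {j : Fin 3} {i : Fin k} : Sum.inl (j, i) ∈ extraLeaves k ↔ j = 2 := by
  simp [extraLeaves, eq_comm]

lemma card_extraLeaves (k : ℕ) : (extraLeaves k).card = k := by
  rw [extraLeaves, Finset.card_image_of_injective _ fun i i' h => by simpa using h, Finset.card_fin]

lemma card_compl_extraLeaves (k : ℕ) : (extraLeaves k)ᶜ.card = 2 * k + 1 := by
  simp only [Finset.card_compl, card_extraLeaves, Fintype.card_sum, Fintype.card_prod,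
    Fintype.card_fin, Fintype.card_unit]
  omega

lemma adj8_center_of_mem_extraLeaves {v : V8 k} (hv : v ∈ extraLeaves k) :
    adj8 k (Sum.inr ()) v := by
  obtain ⟨i, -, rfl⟩ := Finset.mem_image.1 hv
  exact .inl (.inr rfl)

lemma isLeaf8_of_mem_extraLeaves {v : V8 k} (hv : v ∈ extraLeaves k) : isLeaf8 k v := by
  obtain ⟨i, -, rfl⟩ := Finset.mem_image.1 hv
  exact .inl rfl

/-- The path from the center of `T_k` to the end of the arm `a`; only the values `a = 0` and `a = 1`
are meaningful. -/
def armPath (a : Fin 3) : Fin (k + 1) → V8 k :=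
  Fin.cons (Sum.inr ()) fun i => Sum.inl (a, i)

lemma armPath_injective (a : Fin 3) : Function.Injective (armPath (k := k) a) :=
  Fin.cons_injective_iff.2 ⟨by simp, fun i i' h => by simpa using h⟩

lemma adj8_armPath {a : Fin 3} (ha : a ≠ 2) (i : Fin k) :
    adj8 k (armPath a i.castSucc) (armPath a i.succ) := by
  have ha' : (a : ℕ) = 0 ∨ (a : ℕ) = 1 := by omega
  cases k with
  | zero => exact i.elim0
  | succ k =>
    cases i using Fin.cases with
    | zero => exact .inl (.inl ⟨rfl, ha'⟩)
    | succ i => exact .inl ⟨rfl, ha', rfl⟩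

/-- Row `a` of `T_k` (an arm, or the extra leaves if `a = 2`) carries, in order, the tokens whose
destinations form row `x`. -/
def Carries (σ : Equiv.Perm (V8 k)) (a x : Fin 3) : Prop :=
  ∀ i : Fin k, σ (Sum.inl (a, i)) = Sum.inl (x, i)

lemma exists_carries_of_carries {a b x y z : Fin 3} {σ : Equiv.Perm (V8 k)} (ha : a ≠ 2)
    (hb : b ≠ 2) (hab : a ≠ b) (hax : Carries σ a x) (hby : Carries σ b y) (hzx : z ≠ x)
    (hzy : z ≠ y) :
    ∃ τ, ReachableWithin (adj8 k) (k.choose 2 + 2 * k) σ τ ∧ Carries τ a z ∧ Carries τ b y := by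
  have htokens : ∀ v ∉ (extraLeaves k : Set (V8 k)), v ≠ Sum.inr () →
      ∀ i, σ v ≠ Sum.inl (z, i) := by
    rintro (⟨j, i'⟩ | ⟨⟩) hv hvc i hσv
    · have hj : j = a ∨ j = b := by
        have hj2 : j ≠ 2 := by simpa using hv
        omega
      rcases hj with rfl | rfl
      · have hxz : x = z ∧ i' = i := by simpa using (hax i').symm.trans hσv
        exact hzx hxz.1.symm
      · have hyz : y = z ∧ i' = i := by simpa using (hby i').symm.trans hσv
        exact hzy hyz.1.symm
    · exact hvc rfl
  obtain ⟨τ, hστ, hfill, hoff⟩ := exists_fill_path (armPath_injective a) (adj8_armPath ha)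
    (L := extraLeaves k) (by simp [armPath, ha]) (fun v => adj8_center_of_mem_extraLeaves)
    (f := fun i => Sum.inl (z, i)) (fun i i' h => by simpa using h) σ htokens
  refine ⟨τ, hστ, hfill, fun i => (hoff _ (by simpa using hb) ?_).trans (hby i)⟩
  simp [armPath, hab]

lemma carries_π8 (k : ℕ) (a : Fin 3) : Carries (π8 k) a (Equiv.swap 0 1 a) :=
  fun _ => rfl

lemma reachableWithin_π8_one (k : ℕ) :
    ReachableWithin (adj8 k) (3 * (k.choose 2 + 2 * k) + 2 * k) (π8 k) 1 := by
  obtain ⟨τ₁, hπτ₁, h₁0, h₁1⟩ : ∃ τ, ReachableWithin (adj8 k) (k.choose 2 + 2 * k) (π8 k) τ ∧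
      Carries τ 0 2 ∧ Carries τ 1 0 :=
    exists_carries_of_carries (by decide) (by decide) (by decide) (carries_π8 k 0) (carries_π8 k 1)
      (by decide) (by decide)
  obtain ⟨τ₂, hτ₁τ₂, h₂1, h₂0⟩ : ∃ τ, ReachableWithin (adj8 k) (k.choose 2 + 2 * k) τ₁ τ ∧
      Carries τ 1 1 ∧ Carries τ 0 2 :=
    exists_carries_of_carries (by decide) (by decide) (by decide) h₁1 h₁0 (by decide) (by decide)
  obtain ⟨τ₃, hτ₂τ₃, h₃0, h₃1⟩ : ∃ τ, ReachableWithin (adj8 k) (k.choose 2 + 2 * k) τ₂ τ ∧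
      Carries τ 0 0 ∧ Carries τ 1 1 :=
    exists_carries_of_carries (by decide) (by decide) (by decide) h₂0 h₂1 (by decide) (by decide)
  have h_arms : ∀ v ∉ extraLeaves k, v ≠ Sum.inr () → τ₃ v = v := by
    rintro (⟨j, i⟩ | ⟨⟩) hv hvc
    · fin_cases j
      · exact h₃0 i
      · exact h₃1 i
      · simp at hv
    · exact absurd rfl hvc
  have hτ₃ : ReachableWithin (adj8 k) (2 * (extraLeaves k).card) τ₃ 1 :=
    reachableWithin_one_of_forall_notMem_star _ (fun v => adj8_center_of_mem_extraLeaves) τ₃ h_arms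
  refine (((hπτ₁.trans hτ₁τ₂).trans hτ₂τ₃).trans hτ₃).mono ?_
  rw [card_extraLeaves]
  omega

/-- Coordinate of a vertex on the line: the path occupies `-k, …, k` with the center at `0`, and the
extra leaves come after it so that path neighbours are consecutive among all vertices. -/
def position (k : ℕ) : V8 k → ℤ
  | Sum.inr _ => 0
  | Sum.inl (j, i) => if j = 0 then -(i + 1 : ℤ) else if j = 1 then i + 1 else k + i + 1

lemma position_injective (k : ℕ) : Function.Injective (position k) := by
  rintro (⟨a, i⟩ | ⟨⟩) (⟨b, j⟩ | ⟨⟩) h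
  · fin_cases a <;> fin_cases b <;> simp [position] at h ⊢ <;> omega
  · fin_cases a <;> simp [position] at h <;> omega
  · fin_cases b <;> simp [position] at h <;> omega
  · rfl

lemma position_covBy_of_base8 {u v : V8 k} (h : base8 k u v) (hv : v ∉ extraLeaves k) :
    position k u ⋖ position k v ∨ position k v ⋖ position k u := by
  simp only [Order.covBy_iff_add_one_eq]
  rcases u with ⟨j, i⟩ | ⟨⟩ <;> rcases v with ⟨j', i'⟩ | ⟨⟩
  · obtain ⟨rfl, hj, hi⟩ := h
    fin_cases j <;> simp [position] at hj ⊢ <;> omega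
  · exact h.elim
  · fin_cases j' <;> simp [base8, position] at h hv ⊢ <;> omega
  · exact h.elim

lemma position_covBy_of_adj8 {u v : V8 k} (h : adj8 k u v) (hu : u ∉ extraLeaves k)
    (hv : v ∉ extraLeaves k) : position k u ⋖ position k v ∨ position k v ⋖ position k u :=
  h.elim (fun h => position_covBy_of_base8 h hv) fun h => (position_covBy_of_base8 h hu).symm

lemma position_π8_symm {v : V8 k} (hv : v ∉ extraLeaves k) :
    position k ((π8 k).symm v) = -position k v := by
  rcases v with ⟨j, i⟩ | ⟨⟩
  · fin_cases j <;> simp [position, π8] at hv ⊢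
  · rfl

lemma π8_apply_of_mem_extraLeaves {v : V8 k} (hv : v ∈ extraLeaves k) : π8 k v = v := by
  obtain ⟨i, -, rfl⟩ := Finset.mem_image.1 hv
  exact carries_π8 k 2 i

lemma choose_two_le_length_of_fixesHappy {s : List (V8 k × V8 k)}
    (hs : ∀ e ∈ s, adj8 k e.1 e.2) (hsort : applySwaps (π8 k) s = 1)
    (hhappy : FixesHappy (extraLeaves k : Set (V8 k)) (π8 k) s) :
    (2 * k + 1).choose 2 ≤ s.length := by
  have h_off := hhappy.forall_notMem fun _ => π8_apply_of_mem_extraLeaves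
  have h_reversed : ∀ u ∈ (extraLeaves k)ᶜ, ∀ v ∈ (extraLeaves k)ᶜ, position k u < position k v →
      position k ((π8 k).symm v) < position k ((π8 k).symm u) := by
    intro u hu v hv huv
    rw [position_π8_symm (Finset.mem_compl.1 hu), position_π8_symm (Finset.mem_compl.1 hv)]
    exact neg_lt_neg huv
  calc (2 * k + 1).choose 2
      = (extraLeaves k)ᶜ.card.choose 2 := by rw [card_compl_extraLeaves]
    _ ≤ (inversions (position k) (π8 k)).card :=
        choose_two_le_card_inversions (position_injective k) h_reversed
    _ ≤ (inversions (position k) (applySwaps (π8 k) s)).card + s.length :=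
        card_inversions_le_applySwaps (position_injective k) (π8 k) fun e he =>
          position_covBy_of_adj8 (hs e he) (h_off e he).1 (h_off e he).2
    _ = s.length := by rw [hsort, inversions_one, Finset.card_empty, zero_add]

end Tree

end TokenSwapping

/-- On `T_k` there is a sorting swap sequence of length at most `(3/2)k² + 9k`,
while every sorting swap sequence that never moves a token on a happy leaf
(a leaf whose current token is its destination) has length at least `2k² + k`. -/
theorem stmt8 (k : ℕ) (hk : 1 ≤ k) :
    (∃ s : List (V8 k × V8 k), (∀ e ∈ s, adj8 k e.1 e.2) ∧
      applySwaps (π8 k) s = 1 ∧ 2 * s.length ≤ 3 * k ^ 2 + 18 * k) ∧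
    (∀ s : List (V8 k × V8 k), (∀ e ∈ s, adj8 k e.1 e.2) →
      applySwaps (π8 k) s = 1 →
      (∀ (t : ℕ) (h : t < s.length) (u : V8 k),
        (u = (s.get ⟨t, h⟩).1 ∨ u = (s.get ⟨t, h⟩).2) → isLeaf8 k u →
        applySwaps (π8 k) (s.take t) u ≠ u) →
      2 * k ^ 2 + k ≤ s.length) := by
  refine ⟨?_, fun s hs hsort hhappy => ?_⟩
  · obtain ⟨s, hs, hsort, hlength⟩ := TokenSwapping.reachableWithin_π8_one k
    have hchoose : 2 * k.choose 2 ≤ k ^ 2 := by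
      rw [Nat.choose_two_right, sq]
      exact (Nat.mul_div_le _ 2).trans (Nat.mul_le_mul_left k (Nat.sub_le k 1))
    exact ⟨s, hs, hsort, by omega⟩
  · have hhappy' : TokenSwapping.FixesHappy {v | isLeaf8 k v} (π8 k) s := hhappy
    calc 2 * k ^ 2 + k
        = (2 * k + 1).choose 2 := by
          rw [Nat.choose_two_right, Nat.add_sub_cancel, mul_left_comm,
            Nat.mul_div_cancel_left _ two_pos]
          ring
      _ ≤ s.length := TokenSwapping.choose_two_le_length_of_fixesHappy hs hsort
          (hhappy'.mono fun _ => TokenSwapping.isLeaf8_of_mem_extraLeaves)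
end

section
/- For coloured token swapping on a star, every token-vertex assignment gives rise to at least κ nontrivial locked cycles, where κ is the number of nontrivial connected components of the auxiliary multigraph G not containing the edge corresponding to the star's center vertex. Consequently the minimum number of swaps over all token-vertex assignments is exactly (n−1−λ) + κ. -/
/-- Edges of the auxiliary multigraph: for each star vertex `u` there is a directed
edge from its colour `vc u` to the colour `tc u` of its initial token. -/
def edgeRel {C : Type*} {n : ℕ} (vc tc : Fin (n + 1) → C) : C → C → Prop :=
  fun c d => ∃ u : Fin (n + 1), vc u = c ∧ tc u = d

/-- `κ`: the number of nontrivial connected components of the auxiliary multigraph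
(components containing an edge between distinct colours) other than the component
containing the edge of the center vertex `0`. -/
noncomputable def kappa {C : Type*} (n : ℕ) (vc tc : Fin (n + 1) → C) : ℕ :=
  Nat.card {Q : Quotient (Relation.EqvGen.setoid (edgeRel vc tc)) //
    Q ≠ Quotient.mk (Relation.EqvGen.setoid (edgeRel vc tc)) (vc 0) ∧
    ∃ u : Fin (n + 1), vc u ≠ tc u ∧
      Quotient.mk (Relation.EqvGen.setoid (edgeRel vc tc)) (vc u) = Q}

/-!
The tokens on a cycle of an assignment `T` trace a closed walk in `G`, so each cycle stays inside
one component of `G`. A nontrivial component that misses the center's edge therefore contains a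
nontrivial locked cycle, and distinct components contain distinct ones.

For the converse, composing `T` with the transposition of two vertices of the same colour gives
another assignment, and the transposition merges the two cycles if they were different. Starting
from any assignment, such surgeries first fix every leaf-loop and then put any two other vertices of
the same colour on a common cycle. The cycles through these vertices are then exactly the components
of `G` restricted to them, as in the construction of an Eulerian circuit.
-/

open Equiv Equiv.Perm Finset

theorem ncard_image_le_ncard_image {α β γ : Type*} {f : α → β} {g : α → γ} {s t : Set α}
    (hst : s ⊆ t) (ht : (g '' t).Finite) (h : ∀ x ∈ s, ∀ y ∈ s, g x = g y → f x = f y) :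
    (f '' s).ncard ≤ (g '' t).ncard := by
  obtain ⟨r, hrs, hr⟩ := Set.exists_subset_bijOn s f
  have hginj : Set.InjOn g r := fun x hx y hy hxy =>
    hr.injOn hx hy (h x (hrs hx) y (hrs hy) hxy)
  calc (f '' s).ncard = (g '' r).ncard := by
        rw [← hr.image_eq, hr.injOn.ncard_image, hginj.ncard_image]
    _ ≤ (g '' t).ncard := Set.ncard_le_ncard (Set.image_mono (hrs.trans hst)) ht

section SameCycle

variable {V : Type*} {f : Perm V} {u v : V}

theorem sameCycle_setoid_le {r : Setoid V} (h : ∀ x, r x (f x)) : SameCycle.setoid f ≤ r := by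
  rintro x _ ⟨i, rfl⟩
  induction i using Int.induction_on with
  | zero => exact r.refl x
  | succ i ih =>
    rw [add_comm, zpow_one_add]
    exact r.trans ih (h _)
  | pred i ih =>
    have hstep := h ((f ^ (-(i : ℤ) - 1)) x)
    rw [← mul_apply, ← zpow_one_add, add_sub_cancel] at hstep
    exact r.trans ih (r.symm hstep)

variable [Finite V] [DecidableEq V]

theorem sameCycle_swap_mul_of_not_sameCycle (h : ¬ f.SameCycle u v) :
    (swap u v * f).SameCycle u v := by
  have hpow (k : ℕ) : (swap u v * f).SameCycle u ((f ^ k) u) := by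
    induction k with
    | zero => exact SameCycle.rfl
    | succ k ih =>
      have hv : (f ^ (k + 1)) u ≠ v := fun hk => h ⟨(k + 1 : ℕ), by rwa [zpow_natCast]⟩
      rw [pow_succ', mul_apply] at hv ⊢
      rcases eq_or_ne (f ((f ^ k) u)) u with hu | hu
      · rw [hu]
      · have hstep := sameCycle_apply_right.2 ih
        rwa [mul_apply, swap_apply_of_ne_of_ne hu hv] at hstep
  -- Following `f` from `u` to `f.symm u`, which the product sends to `v`.
  obtain ⟨k, hk⟩ := (sameCycle_symm_apply_right.2 (SameCycle.refl f u)).exists_nat_pow_eq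
  have hlast := sameCycle_apply_right.2 (hpow k)
  rwa [hk, mul_apply, apply_symm_apply, swap_apply_left] at hlast

theorem sameCycle_setoid_le_swap_mul (h : ¬ f.SameCycle u v) :
    SameCycle.setoid f ≤ SameCycle.setoid (swap u v * f) := by
  have huv := sameCycle_swap_mul_of_not_sameCycle h
  refine sameCycle_setoid_le fun x => ?_
  change (swap u v * f).SameCycle x (f x)
  have hstep := sameCycle_apply_right.2 (SameCycle.refl (swap u v * f) x)
  rw [mul_apply] at hstep
  rcases eq_or_ne (f x) u with hu | hu
  · rw [hu, swap_apply_left] at hstep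
    exact hu ▸ hstep.trans huv.symm
  rcases eq_or_ne (f x) v with hv | hv
  · rw [hv, swap_apply_right] at hstep
    exact hv ▸ hstep.trans huv
  · rwa [swap_apply_of_ne_of_ne hu hv] at hstep

end SameCycle

section Assignment

variable {V C : Type*} {vc tc : V → C} {T : Perm V}

/-- A token-vertex assignment: the token initially on `u` is sent to the vertex `T u`, whose colour
must be that of the token. -/
def IsAssignment (vc tc : V → C) (T : Perm V) : Prop :=
  ∀ u, vc (T u) = tc u

theorem IsAssignment.swap_mul [DecidableEq V] (hT : IsAssignment vc tc T) {u v : V}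
    (huv : vc u = vc v) : IsAssignment vc tc (swap u v * T) := by
  intro w
  rw [mul_apply, ← hT w, swap_apply_def]
  split_ifs with hu hv
  · rw [hu, huv]
  · rw [hv, huv]
  · rfl

theorem exists_isAssignment [Fintype V] [DecidableEq C]
    (hcount : ∀ c, #{u | tc u = c} = #{u | vc u = c}) : ∃ T, IsAssignment vc tc T := by
  have hfiber (c : C) : Nonempty ({u // tc u = c} ≃ {u // vc u = c}) :=
    Fintype.card_eq.1 (by rw [Fintype.card_subtype, Fintype.card_subtype, hcount])
  exact ⟨ofFiberEquiv fun c => (hfiber c).some, ofFiberEquiv_map _⟩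

variable [Finite V] {L : Set V}

theorem exists_isAssignment_fixing (h : ∃ T, IsAssignment vc tc T)
    (hL : ∀ u ∈ L, tc u = vc u) : ∃ T, IsAssignment vc tc T ∧ ∀ u ∈ L, T u = u := by
  classical
  obtain ⟨T, hT, hmax⟩ :=
    (Set.toFinite {T | IsAssignment vc tc T}).exists_maximalFor (fun T => {u ∈ L | T u = u}) _ h
  refine ⟨T, hT, fun u hu => ?_⟩
  have hfixed : {w ∈ L | T w = w} ≤ {w ∈ L | (swap u (T u) * T) w = w} := by
    rintro w ⟨hwL, hw⟩
    refine ⟨hwL, ?_⟩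
    rw [mul_apply, hw]
    rcases eq_or_ne w u with rfl | hwu
    · rw [hw, swap_self, refl_apply]
    · exact swap_apply_of_ne_of_ne hwu fun hwTu => hwu (T.injective (hw.trans hwTu))
  have hassign := hT.swap_mul (u := u) (v := T u) (by rw [hT u, hL u hu])
  have hfix : (swap u (T u) * T) u = u := swap_apply_right _ _
  exact (hmax hassign hfixed ⟨hu, hfix⟩).2

theorem exists_isAssignment_fixing_sameCycle (h : ∃ T, IsAssignment vc tc T)
    (hL : ∀ u ∈ L, tc u = vc u) :
    ∃ T, IsAssignment vc tc T ∧ (∀ u ∈ L, T u = u) ∧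
      ∀ u ∉ L, ∀ v ∉ L, vc u = vc v → T.SameCycle u v := by
  classical
  obtain ⟨T, ⟨hT, hfix⟩, hmax⟩ :=
    (Set.toFinite {T | IsAssignment vc tc T ∧ ∀ u ∈ L, T u = u}).exists_maximalFor
      SameCycle.setoid _ (exists_isAssignment_fixing h hL)
  refine ⟨T, hT, hfix, fun u hu v hv huv => ?_⟩
  by_contra hn
  have hfix' : ∀ w ∈ L, (swap u v * T) w = w := fun w hw => by
    rw [mul_apply, hfix w hw, swap_apply_of_ne_of_ne] <;> rintro rfl <;> contradiction
  exact hn (hmax ⟨hT.swap_mul huv, hfix'⟩ (sameCycle_setoid_le_swap_mul hn)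
    (sameCycle_swap_mul_of_not_sameCycle hn))

end Assignment

section StarCost

variable {V C : Type*} [Fintype V] [DecidableEq V] {vc tc : V → C} {T : Perm V} {o : V}

/-- The leaves of the star with center `o` whose edge in the auxiliary multigraph is a loop. Their
number is `λ`. -/
def leafLoops [DecidableEq C] (o : V) (vc tc : V → C) : Finset V :=
  {v | v ≠ o ∧ tc v = vc v}

/-- The leaves of the star with center `o` whose token the assignment `T` sends elsewhere. Their
number is the term `n_U` of the star formula. -/
def unhappyLeaves (o : V) (T : Perm V) : Finset V :=
  {v | v ≠ o ∧ T v ≠ v}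

/-- The nontrivial cycles of `T` that avoid the center `o` of the star. Their number is the term `ℓ`
of the star formula. -/
def lockedCycles (o : V) (T : Perm V) : Finset (Perm V) :=
  {c ∈ T.cycleFactorsFinset | c o = o}

theorem coe_lockedCycles (o : V) (T : Perm V) :
    (lockedCycles o T : Set (Perm V)) = T.cycleOf '' {u | T u ≠ u ∧ ¬ T.SameCycle u o} := by
  ext c
  rw [lockedCycles, mem_coe, mem_filter]
  constructor
  · rintro ⟨hc, hco⟩
    obtain ⟨u, hu⟩ := (mem_cycleFactorsFinset_iff.1 hc).1.nonempty_support
    obtain rfl := cycle_is_cycleOf hu hc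
    have hTu : T u ≠ u := mem_support.1 (mem_cycleFactorsFinset_support_le hc hu)
    refine ⟨u, ⟨hTu, fun huo => hTu ?_⟩, rfl⟩
    rw [huo.cycleOf_apply] at hco
    exact huo.apply_eq_self_iff.2 hco
  · rintro ⟨u, ⟨hTu, huo⟩, rfl⟩
    exact ⟨cycleOf_mem_cycleFactorsFinset_iff.2 (mem_support.2 hTu),
      cycleOf_apply_of_not_sameCycle huo⟩

variable [DecidableEq C]

theorem card_erase_sdiff_leafLoops (o : V) (vc tc : V → C) :
    #(univ.erase o \ leafLoops o vc tc) = Fintype.card V - 1 - #(leafLoops o vc tc) := by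
  have hsub : leafLoops o vc tc ⊆ univ.erase o := fun v hv =>
    mem_erase.2 ⟨(mem_filter.1 hv).2.1, mem_univ v⟩
  rw [card_sdiff_of_subset hsub, card_erase_of_mem (mem_univ o), card_univ]

theorem IsAssignment.erase_sdiff_leafLoops_subset (hT : IsAssignment vc tc T) :
    univ.erase o \ leafLoops o vc tc ⊆ unhappyLeaves o T := by
  intro v
  simp only [leafLoops, unhappyLeaves, mem_sdiff, mem_erase, mem_filter, mem_univ, true_and,
    and_true]
  exact fun ⟨hvo, hv⟩ => ⟨hvo, fun hTv => hv ⟨hvo, by rw [← hT v, hTv]⟩⟩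

theorem unhappyLeaves_subset_erase_sdiff (hfix : ∀ u ∈ leafLoops o vc tc, T u = u) :
    unhappyLeaves o T ⊆ univ.erase o \ leafLoops o vc tc := by
  intro v hv
  obtain ⟨-, hvo, hTv⟩ := mem_filter.1 hv
  exact mem_sdiff.2 ⟨mem_erase.2 ⟨hvo, mem_univ v⟩, fun hvL => hTv (hfix v hvL)⟩

end StarCost

section Components

variable {C : Type*} {n : ℕ} {vc tc : Fin (n + 1) → C} {T : Perm (Fin (n + 1))}
  {u v : Fin (n + 1)}

/-- The connected component of the auxiliary multigraph that contains the edge of the star vertex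
`u`. -/
def edgeComponent (vc tc : Fin (n + 1) → C) (u : Fin (n + 1)) :
    Quotient (Relation.EqvGen.setoid (edgeRel vc tc)) :=
  Quotient.mk _ (vc u)

theorem kappa_eq_ncard (vc tc : Fin (n + 1) → C) :
    kappa n vc tc = (edgeComponent vc tc ''
      {u | vc u ≠ tc u ∧ edgeComponent vc tc u ≠ edgeComponent vc tc 0}).ncard := by
  rw [← Nat.card_coe_set_eq]
  refine Nat.card_congr (Equiv.subtypeEquivRight fun Q => ?_)
  constructor
  · rintro ⟨hQ, u, hu, rfl⟩
    exact ⟨u, ⟨hu, hQ⟩, rfl⟩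
  · rintro ⟨u, ⟨hu, hQ⟩, rfl⟩
    exact ⟨hQ, u, hu, rfl⟩

theorem IsAssignment.edgeComponent_eq_of_sameCycle (hT : IsAssignment vc tc T)
    (h : T.SameCycle u v) : edgeComponent vc tc u = edgeComponent vc tc v := by
  have hstep (x : Fin (n + 1)) : edgeComponent vc tc x = edgeComponent vc tc (T x) :=
    Quotient.sound (.rel _ _ ⟨x, rfl, (hT x).symm⟩)
  exact sameCycle_setoid_le (r := Setoid.ker (edgeComponent vc tc)) hstep h

theorem IsAssignment.sameCycle_of_edgeComponent_eq {L : Set (Fin (n + 1))}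
    (hT : IsAssignment vc tc T) (hfix : ∀ u ∈ L, T u = u)
    (hsame : ∀ u ∉ L, ∀ v ∉ L, vc u = vc v → T.SameCycle u v) (hu : u ∉ L) (hv : v ∉ L)
    (h : edgeComponent vc tc u = edgeComponent vc tc v) : T.SameCycle u v := by
  -- `reach` is constant along the edges of `G`, hence on components, and `reach (vc u)` is the
  -- cycle of `u`.
  let reach (c : C) : Set (Fin (n + 1)) := {w | ∃ x ∉ L, vc x = c ∧ T.SameCycle x w}
  have hreach (x) (hx : x ∉ L) : reach (vc x) = {w | T.SameCycle x w} := by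
    ext w
    exact ⟨fun ⟨y, hy, hyx, hyw⟩ => (hsame x hx y hy hyx.symm).trans hyw,
      fun hxw => ⟨x, hx, rfl, hxw⟩⟩
  have hedge (c d : C) (hcd : edgeRel vc tc c d) : reach c = reach d := by
    obtain ⟨x, rfl, rfl⟩ := hcd
    rw [← hT x]
    by_cases hx : x ∈ L
    · rw [hfix x hx]
    · have hTx : T x ∉ L := fun hTx => hx (T.injective (hfix _ hTx) ▸ hTx)
      simp only [hreach x hx, hreach (T x) hTx, sameCycle_apply_left]
  have heq : reach (vc u) = reach (vc v) :=
    Setoid.eqvGen_le (s := Setoid.ker reach) hedge (Quotient.exact h)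
  rw [hreach u hu, hreach v hv] at heq
  exact heq.symm.subset (SameCycle.refl T v)

theorem IsAssignment.kappa_le_card_lockedCycles (hT : IsAssignment vc tc T) :
    kappa n vc tc ≤ #(lockedCycles 0 T) := by
  have hmoved {u} (hu : vc u ≠ tc u) : T u ≠ u := fun hTu => hu (by rw [← hT u, hTu])
  rw [kappa_eq_ncard, ← Set.ncard_coe_finset, coe_lockedCycles]
  refine ncard_image_le_ncard_image ?_ (Set.toFinite _) ?_
  · exact fun u ⟨hu, hu0⟩ => ⟨hmoved hu, fun h => hu0 (hT.edgeComponent_eq_of_sameCycle h)⟩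
  · intro u ⟨hu, _⟩ v ⟨hv, _⟩ huv
    exact hT.edgeComponent_eq_of_sameCycle ((sameCycle_iff_cycleOf_eq_of_mem_support
      (mem_support.2 (hmoved hu)) (mem_support.2 (hmoved hv))).2 huv)

theorem IsAssignment.card_lockedCycles_le_kappa [DecidableEq C] (hT : IsAssignment vc tc T)
    (hfix : ∀ u ∈ leafLoops 0 vc tc, T u = u)
    (hsame : ∀ u ∉ leafLoops 0 vc tc, ∀ v ∉ leafLoops 0 vc tc, vc u = vc v → T.SameCycle u v) :
    #(lockedCycles 0 T) ≤ kappa n vc tc := by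
  have hcycle {u v} := hT.sameCycle_of_edgeComponent_eq (u := u) (v := v)
    (L := leafLoops 0 vc tc) hfix hsame
  have hmoved {u} (hu : T u ≠ u) : u ∉ leafLoops 0 vc tc := fun huL => hu (hfix u huL)
  have hcenter : 0 ∉ leafLoops 0 vc tc := fun h => (mem_filter.1 h).2.1 rfl
  rw [kappa_eq_ncard, ← Set.ncard_coe_finset, coe_lockedCycles]
  refine ncard_image_le_ncard_image ?_ (Set.toFinite _) ?_
  · intro u ⟨hTu, hu0⟩
    have hne : u ≠ 0 := fun h => hu0 (h ▸ SameCycle.rfl)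
    exact ⟨fun h => hmoved hTu (mem_filter.2 ⟨mem_univ u, hne, h.symm⟩),
      fun h => hu0 (hcycle (hmoved hTu) hcenter h)⟩
  · exact fun u ⟨hu, _⟩ v ⟨hv, _⟩ huv => (hcycle (hmoved hu) (hmoved hv) huv).cycleOf_eq

end Components

/-- For coloured token swapping on a star (with matching colour counts), every
token-vertex assignment `T` (a permutation with `vc (T u) = tc u`) has at least `κ`
nontrivial locked cycles; consequently, by the star formula `n_U + ℓ`, the minimum
number of swaps over all token-vertex assignments is exactly `(n − λ) + κ`
(star on `n + 1` vertices, so `n` leaves; `λ` = number of leaf-loops). -/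
theorem stmt16 {C : Type*} [DecidableEq C] (n : ℕ) (vc tc : Fin (n + 1) → C)
    (hcount : ∀ c : C,
      (Finset.univ.filter fun u : Fin (n + 1) => tc u = c).card =
        (Finset.univ.filter fun u : Fin (n + 1) => vc u = c).card) :
    (∀ T : Equiv.Perm (Fin (n + 1)), (∀ u, vc (T u) = tc u) →
      kappa n vc tc ≤ (T.cycleFactorsFinset.filter fun c => c 0 = 0).card) ∧
    IsLeast {m : ℕ | ∃ T : Equiv.Perm (Fin (n + 1)), (∀ u, vc (T u) = tc u) ∧
        m = (Finset.univ.filter fun v : Fin (n + 1) => v ≠ 0 ∧ T v ≠ v).card +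
          (T.cycleFactorsFinset.filter fun c => c 0 = 0).card}
      ((n - (Finset.univ.filter fun v : Fin (n + 1) => v ≠ 0 ∧ tc v = vc v).card) +
        kappa n vc tc) := by
  have hleaves : #(univ.erase 0 \ leafLoops 0 vc tc) = n - #(leafLoops 0 vc tc) := by
    rw [card_erase_sdiff_leafLoops, Fintype.card_fin, Nat.add_sub_cancel]
  have hkappa (T) (hT : IsAssignment vc tc T) := hT.kappa_le_card_lockedCycles
  refine ⟨hkappa, ?_, ?_⟩
  · obtain ⟨T, hT, hfix, hsame⟩ := exists_isAssignment_fixing_sameCycle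
      (L := leafLoops 0 vc tc) (exists_isAssignment hcount) fun u hu => (mem_filter.1 hu).2.2
    have hunhappy : univ.erase 0 \ leafLoops 0 vc tc = unhappyLeaves 0 T :=
      hT.erase_sdiff_leafLoops_subset.antisymm (unhappyLeaves_subset_erase_sdiff hfix)
    have hlocked : kappa n vc tc = #(lockedCycles 0 T) :=
      (hkappa T hT).antisymm (hT.card_lockedCycles_le_kappa hfix hsame)
    refine ⟨T, hT, ?_⟩
    change n - #(leafLoops 0 vc tc) + _ = #(unhappyLeaves 0 T) + #(lockedCycles 0 T)
    rw [← hleaves, hunhappy, hlocked]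
  · rintro _ ⟨T, hT : IsAssignment vc tc T, rfl⟩
    exact add_le_add (hleaves.ge.trans (card_le_card hT.erase_sdiff_leafLoops_subset)) (hkappa T hT)
end
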